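/- arXiv:2303.05751 — 3 statements merged into one kernel-verified Lean document; each statement's English description precedes it below -/
import Mathlib

section
/- Let M be a balanced multiset of subsets of [N] that is Z-irreducible, with complexity m. Then m ≤ (N+1)^{(N+1)/2}. -/
/-!
Counting multiplicities turns a balanced multiset into a nonnegative integer solution `x` of the
linear system `∑_{I ∋ i} x I = c` for all `i`, and `ℤ`-irreducibility says that the only nonzero
solution in natural numbers below the given one is itself. By Carathéodory's argument for cones,
the support of any nonzero real solution contains the support of a nonzero solution supported on
linearly independent columns of the membership matrix. Cramer's rule rescales the latter to a
solution `v` in natural numbers whose complexity `d` is the absolute value of the determinant of a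
zero-one matrix, so that `2 ^ N * d ≤ (N + 1) ^ ((N + 1) / 2)` by Hadamard's inequality.

Starting from the irreducible multiset, subtract the largest multiple `t • v` that keeps `x`
nonnegative, and repeat. Each step shrinks the support, so there are at most `2 ^ N` steps. If some
`t` is at least `1`, then `v` is a submultiset, hence the whole multiset, and `m = d`. Otherwise
each step lowers the complexity by at most `d`, and summing over all the steps bounds `m`.
-/

/-- A multiset `M` of subsets of `[N]` is balanced with complexity `m` if each
`i ∈ [N]` appears in exactly `m` sets of `M`, counted with multiplicity. -/
def BalancedMultiset {N : ℕ} (M : Multiset (Finset (Fin N))) (m : ℕ) : Prop :=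
  ∀ i : Fin N, (M.filter (fun I => i ∈ I)).card = m

/-- A balanced multiset is `ℤ`-irreducible if no proper nonempty sub-multiset of it
is balanced. -/
def ZIrreducible {N : ℕ} (M : Multiset (Finset (Fin N))) : Prop :=
  (∃ m : ℕ, BalancedMultiset M m) ∧
  ∀ M' : Multiset (Finset (Fin N)), M' ≤ M → M' ≠ 0 → M' ≠ M →
    ¬ ∃ m' : ℕ, BalancedMultiset M' m'

open Finset Function Matrix

theorem prod_le_arith_mean_pow {ι : Type*} [Fintype ι] [Nonempty ι] {z : ι → ℝ}
    (hz : ∀ i, 0 ≤ z i) :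
    ∏ i, z i ≤ ((∑ i, z i) / Fintype.card ι) ^ Fintype.card ι := by
  have hprod : 0 ≤ ∏ i, z i := prod_nonneg fun i _ => hz i
  have amgm : (∏ i, z i) ^ (Fintype.card ι : ℝ)⁻¹ ≤ (∑ i, z i) / Fintype.card ι := by
    simpa using Real.geom_mean_le_arith_mean univ (fun _ => 1) z (by simp)
      (by simp [Fintype.card_pos]) fun i _ => hz i
  calc ∏ i, z i
      = ((∏ i, z i) ^ (Fintype.card ι : ℝ)⁻¹) ^ Fintype.card ι :=
        (Real.rpow_inv_natCast_pow hprod Fintype.card_ne_zero).symm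
    _ ≤ _ := by gcongr

section Hadamard

open scoped ComplexOrder

variable {n 𝕜 : Type*} [Fintype n] [DecidableEq n] [RCLike 𝕜]

theorem re_det_le_re_trace_div_card_pow_of_posSemidef [Nonempty n] {A : Matrix n n 𝕜}
    (hA : A.PosSemidef) :
    RCLike.re A.det ≤ (RCLike.re A.trace / Fintype.card n) ^ Fintype.card n := by
  rw [hA.isHermitian.det_eq_prod_eigenvalues, hA.isHermitian.trace_eq_sum_eigenvalues,
    ← RCLike.ofReal_prod, ← RCLike.ofReal_sum, RCLike.ofReal_re, RCLike.ofReal_re]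
  exact prod_le_arith_mean_pow hA.eigenvalues_nonneg

theorem norm_det_sq_le_card_pow [Nonempty n] {C : Matrix n n 𝕜} (hC : ∀ i j, ‖C i j‖ ≤ 1) :
    ‖C.det‖ ^ 2 ≤ (Fintype.card n : ℝ) ^ Fintype.card n := by
  have hdet : RCLike.re (Cᴴ * C).det = ‖C.det‖ ^ 2 := by
    rw [det_mul, det_conjTranspose, RCLike.star_def, RCLike.conj_mul]
    norm_cast
  have htrace : RCLike.re (Cᴴ * C).trace = ∑ i, ∑ j, ‖C j i‖ ^ 2 := by
    simp only [trace, Matrix.diag_apply, mul_apply, conjTranspose_apply, RCLike.star_def,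
      RCLike.conj_mul]
    norm_cast
  have hsum : ∑ i, ∑ j, ‖C j i‖ ^ 2 ≤ (Fintype.card n : ℝ) * Fintype.card n := by
    calc ∑ i, ∑ j, ‖C j i‖ ^ 2 ≤ ∑ _i : n, ∑ _j : n, (1 : ℝ) := by
          gcongr with i _ j _
          exact pow_le_one₀ (norm_nonneg _) (hC j i)
      _ = _ := by simp
  calc ‖C.det‖ ^ 2 ≤ ((∑ i, ∑ j, ‖C j i‖ ^ 2) / Fintype.card n) ^ Fintype.card n := by
        rw [← hdet, ← htrace]
        exact re_det_le_re_trace_div_card_pow_of_posSemidef (posSemidef_conjTranspose_mul_self C)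
    _ ≤ (Fintype.card n : ℝ) ^ Fintype.card n := by
        gcongr
        exact div_le_of_le_mul₀ (by positivity) (by positivity) hsum

/-- Hadamard's upper bound `(n + 1) ^ ((n + 1) / 2) / 2 ^ n` for the absolute value of the
determinant of an `n × n` real matrix with entries in `[0, 1]`. -/
noncomputable def unitIntervalDetBound (n : ℕ) : ℝ :=
  ((n : ℝ) + 1) ^ (((n : ℝ) + 1) / 2) / 2 ^ n

theorem unitIntervalDetBound_nonneg (n : ℕ) : 0 ≤ unitIntervalDetBound n := by
  rw [unitIntervalDetBound]
  positivity

theorem abs_det_le_unitIntervalDetBound {B : Matrix n n ℝ} (hB : ∀ i j, B i j ∈ Set.Icc 0 1) :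
    |B.det| ≤ unitIntervalDetBound (Fintype.card n) := by
  -- Entries in `[0, 1]` become entries in `[-1, 1]` in `2 • B - 1`; the border is chosen so that
  -- the Schur complement of its corner is `2 • B`.
  let C : Matrix (Unit ⊕ n) (Unit ⊕ n) ℝ :=
    fromBlocks 1 (of fun _ _ => 1) (of fun _ _ => -1) ((2 : ℝ) • B - of fun _ _ => 1)
  have hC : ∀ i j, ‖C i j‖ ≤ 1 := by
    rintro (i | i) (j | j)
    · simp [C]
    · simp [C]
    · simp [C]
    · obtain ⟨h0, h1⟩ := hB i j
      simp only [C, fromBlocks_apply₂₂, Matrix.sub_apply, Matrix.smul_apply, of_apply, smul_eq_mul,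
        Real.norm_eq_abs, abs_le]
      constructor <;> linarith
  have hdet : C.det = 2 ^ Fintype.card n * B.det := by
    rw [det_fromBlocks_one₁₁, ← det_smul]
    congr 1
    ext i j
    simp [mul_apply]
  have hsq := norm_det_sq_le_card_pow hC
  rw [unitIntervalDetBound, le_div_iff₀' (by positivity)]
  calc 2 ^ Fintype.card n * |B.det| = |C.det| := by
        rw [hdet, abs_mul, abs_of_pos (by positivity : (0 : ℝ) < 2 ^ Fintype.card n)]
    _ ≤ √(((Fintype.card n : ℝ) + 1) ^ (Fintype.card n + 1)) :=
        Real.abs_le_sqrt (by simpa [add_comm] using hsq)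
    _ = ((Fintype.card n : ℝ) + 1) ^ (((Fintype.card n : ℝ) + 1) / 2) := by
        rw [Real.sqrt_eq_rpow, ← Real.rpow_natCast, ← Real.rpow_mul (by positivity)]
        push_cast
        ring_nf

end Hadamard

section Caratheodory

variable {α 𝕜 : Type*} [Field 𝕜] [LinearOrder 𝕜] [IsStrictOrderedRing 𝕜]

theorem exists_sub_smul_nonneg_support_ssubset [Finite α] {x y : α → 𝕜} (hx : 0 ≤ x)
    (hyx : support y ⊆ support x) (hy : ∃ a, 0 < y a) :
    ∃ t : 𝕜, 0 ≤ t ∧ 0 ≤ x - t • y ∧ support (x - t • y) ⊂ support x := by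
  obtain ⟨a, ha, hmin⟩ := Set.exists_min_image {a | 0 < y a} (fun a => x a / y a)
    (Set.toFinite _) hy
  have ht : 0 ≤ x a / y a := div_nonneg (hx a) (le_of_lt ha)
  refine ⟨x a / y a, ht, fun b => sub_nonneg.2 ?_, ?_⟩
  · rcases lt_or_ge 0 (y b) with hb | hb
    · exact (le_div_iff₀ hb).1 (hmin b hb)
    · exact (mul_nonpos_of_nonneg_of_nonpos ht hb).trans (hx b)
  · refine Set.ssubset_iff_exists.2 ⟨fun b => ?_, a, hyx (ne_of_gt ha), ?_⟩
    · contrapose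
      intro hb
      simp [notMem_support.1 hb, notMem_support.1 fun h => hb (hyx h)]
    · simp [(ne_of_gt ha : y a ≠ 0)]

variable [Fintype α] {E : Type*} [AddCommGroup E] [Module 𝕜 E] {w : α → E}

theorem exists_pos_linearCombination_eq_zero_of_not_linearIndepOn {s : Set α}
    (h : ¬ LinearIndepOn 𝕜 w s) :
    ∃ y : α → 𝕜, support y ⊆ s ∧ Fintype.linearCombination 𝕜 w y = 0 ∧ ∃ a, 0 < y a := by
  obtain ⟨f, hfs, hf, hne⟩ := linearDepOn_iff'.1 h
  have hfs' : support f ⊆ s := by simpa [Finsupp.mem_supported] using hfs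
  have hf' : Fintype.linearCombination 𝕜 w f = 0 := by
    rwa [← Finsupp.linearCombination_eq_fintype_linearCombination_apply 𝕜 w,
      Finsupp.linearEquivFunOnFinite_symm_coe]
  obtain ⟨a, ha⟩ := Finsupp.ne_iff.1 hne
  rcases lt_or_gt_of_ne ha with ha | ha
  · exact ⟨-f, by rwa [support_neg], by rw [map_neg, hf', neg_zero], a, neg_pos.2 ha⟩
  · exact ⟨f, hfs', hf', a, ha⟩

theorem exists_nonneg_linearIndepOn_support (w : α → E) {x : α → 𝕜} (hx : 0 ≤ x) :
    ∃ y : α → 𝕜, 0 ≤ y ∧ support y ⊆ support x ∧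
      Fintype.linearCombination 𝕜 w y = Fintype.linearCombination 𝕜 w x ∧
      LinearIndepOn 𝕜 w (support y) := by
  induction hs : support x using WellFoundedLT.induction generalizing x with
  | ind s ih =>
    subst hs
    by_cases hli : LinearIndepOn 𝕜 w (support x)
    · exact ⟨x, hx, subset_rfl, rfl, hli⟩
    obtain ⟨z, hzx, hz, hpos⟩ := exists_pos_linearCombination_eq_zero_of_not_linearIndepOn hli
    obtain ⟨t, -, hnonneg, hlt⟩ := exists_sub_smul_nonneg_support_ssubset hx hzx hpos
    obtain ⟨y, hy, hyx, hsum, hyli⟩ := ih _ hlt hnonneg rfl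
    exact ⟨y, hy, hyx.trans hlt.subset, by rw [hsum, map_sub, map_smul, hz, smul_zero, sub_zero],
      hyli⟩

end Caratheodory

section Cramer

theorem submatrix_mulVec_comp_of_support_subset_range {l m α R : Type*} [Fintype m] [Fintype α]
    [NonUnitalNonAssocSemiring R] (A : Matrix l α R) {x : α → R} {e : m ↪ α}
    (hx : support x ⊆ Set.range e) : A.submatrix id e *ᵥ (x ∘ e) = A *ᵥ x := by
  ext i
  refine Fintype.sum_of_injective e e.injective _ _ (fun a ha => ?_) fun _ => rfl
  rw [notMem_support.1 fun h => ha (hx h), mul_zero]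

variable {m α : Type*} [Fintype m] [DecidableEq m]

theorem exists_embedding_isUnit_submatrix {K : Type*} [Field K] {A : Matrix m α K}
    (hspan : Submodule.span K (Set.range A.col) = ⊤) {s : Set α} (hs : LinearIndepOn K A.col s) :
    ∃ e : m ↪ α, s ⊆ Set.range e ∧ IsUnit (A.submatrix id e) := by
  obtain ⟨b, -, hsb, hb_span, hb⟩ := exists_linearIndepOn_extension hs (Set.subset_univ s)
  have htop : ⊤ ≤ Submodule.span K (Set.range fun a : b => A.col a) := by
    rw [← hspan, ← Set.image_eq_range, ← Set.image_univ]
    exact Submodule.span_le.2 hb_span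
  obtain ⟨e⟩ : Nonempty (m ≃ b) :=
    ⟨(Pi.basisFun K m).indexEquiv (Module.Basis.mk hb htop)⟩
  refine ⟨e.toEmbedding.trans (Embedding.subtype _), ?_, ?_⟩
  · intro a ha
    exact ⟨e.symm ⟨a, hsb ha⟩, by simp⟩
  · rw [← linearIndependent_cols_iff_isUnit]
    exact hb.comp e e.injective

variable [Fintype α] {R S : Type*} [CommRing R] [CommRing S]

theorem det_submatrix_smul_comp_eq_adjugate_mulVec (A : Matrix m α R) {x : α → R} {e : m ↪ α}
    (hx : support x ⊆ Set.range e) :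
    (A.submatrix id e).det • (x ∘ e) = (A.submatrix id e).adjugate *ᵥ (A *ᵥ x) := by
  rw [← submatrix_mulVec_comp_of_support_subset_range A hx, mulVec_mulVec, adjugate_mul,
    smul_mulVec, one_mulVec]

theorem exists_map_det_submatrix_mul_eq (f : R →+* S) {A : Matrix m α R} {b : m → R} {x : α → S}
    {c : S} (hA : A.map f *ᵥ x = c • (f ∘ b)) {e : m ↪ α} (hx : support x ⊆ Set.range e) (a : α) :
    ∃ k : R, f (A.submatrix id e).det * x a = c * f k := by
  by_cases ha : x a = 0
  · exact ⟨0, by simp [ha]⟩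
  obtain ⟨j, rfl⟩ := hx ha
  have cramer := congrFun (det_submatrix_smul_comp_eq_adjugate_mulVec (A.map f) hx) j
  rw [hA, mulVec_smul, submatrix_map, ← f.mapMatrix_apply, ← f.map_det, ← f.map_adjugate]
    at cramer
  exact ⟨((A.submatrix id e).adjugate *ᵥ b) j, by rw [f.map_mulVec]; exact cramer⟩

end Cramer

section BalancedWeights

/-- The element-versus-subset incidence matrix of a type: the column at `I` is the indicator vector
of the finite set `I`. -/
def membershipMatrix (ι R : Type*) [DecidableEq ι] [Zero R] [One R] : Matrix ι (Finset ι) R :=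
  of fun i I => if i ∈ I then 1 else 0

variable {ι R : Type*} [DecidableEq ι]

theorem membershipMatrix_apply [Zero R] [One R] (i : ι) (I : Finset ι) :
    membershipMatrix ι R i I = if i ∈ I then 1 else 0 := rfl

theorem map_membershipMatrix {S : Type*} [NonAssocSemiring R] [NonAssocSemiring S] (f : R →+* S) :
    (membershipMatrix ι R).map f = membershipMatrix ι S := by
  ext i I
  simp [membershipMatrix_apply, apply_ite f]

theorem span_range_col_membershipMatrix [Finite ι] [Semiring R] :
    Submodule.span R (Set.range (membershipMatrix ι R).col) = ⊤ := by
  rw [eq_top_iff, ← (Pi.basisFun R ι).span_eq]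
  refine Submodule.span_mono ?_
  rintro _ ⟨i, rfl⟩
  exact ⟨{i}, by ext j; simp [membershipMatrix_apply, Pi.single_apply]⟩

variable [Fintype ι]

/-- The weights `x` on the subsets of `ι` are balanced with complexity `c` if the subsets containing
any given element have total weight `c`. Natural-number weights are the balanced multisets, with
`x I` the multiplicity of `I`; real weights are their fractional relaxation. -/
def IsBalancedWeight [AddCommMonoid R] (x : Finset ι → R) (c : R) : Prop :=
  ∀ i, ∑ I with i ∈ I, x I = c

theorem isBalancedWeight_iff_mulVec [NonAssocSemiring R] {x : Finset ι → R} {c : R} :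
    IsBalancedWeight x c ↔ membershipMatrix ι R *ᵥ x = fun _ => c := by
  simp [IsBalancedWeight, funext_iff, mulVec, dotProduct, membershipMatrix_apply, sum_filter]

theorem isBalancedWeight_iff_linearCombination [Semiring R] {x : Finset ι → R} {c : R} :
    IsBalancedWeight x c ↔
      Fintype.linearCombination R (membershipMatrix ι R).col x = fun _ => c := by
  simp [IsBalancedWeight, funext_iff, Fintype.linearCombination_apply, membershipMatrix_apply,
    sum_filter]

namespace IsBalancedWeight

theorem sub_smul [Ring R] {x y : Finset ι → R} {c d : R} (hx : IsBalancedWeight x c)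
    (hy : IsBalancedWeight y d) (t : R) : IsBalancedWeight (x - t • y) (c - t * d) := fun i => by
  simp [sum_sub_distrib, ← mul_sum, hx i, hy i]

theorem natCast [AddCommMonoidWithOne R] {v : Finset ι → ℕ} {d : ℕ} (hv : IsBalancedWeight v d) :
    IsBalancedWeight (fun I => (v I : R)) (d : R) := fun i => by
  simp [← hv i]

theorem of_mul_eq_mul [CommRing R] [IsDomain R] [CharZero R] {x : Finset ι → R} {c : R}
    {v : Finset ι → ℕ} {d : ℕ} (hx : IsBalancedWeight x c) (hc : c ≠ 0)
    (hv : ∀ I, d * x I = c * v I) : IsBalancedWeight v d := fun i => by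
  have hsum : c * ((∑ I with i ∈ I, v I : ℕ) : R) = c * d :=
    calc c * ((∑ I with i ∈ I, v I : ℕ) : R)
        = d * ∑ I with i ∈ I, x I := by simp_rw [Nat.cast_sum, mul_sum, hv]
      _ = c * d := by rw [hx i, mul_comm]
  exact_mod_cast mul_left_cancel₀ hc hsum

theorem single_empty [AddCommMonoid R] (r : R) :
    IsBalancedWeight (Pi.single (∅ : Finset ι) r) 0 := fun i =>
  sum_eq_zero fun _ hI => by simp [ne_empty_of_mem (mem_filter.1 hI).2]

theorem complexity_pos [AddCommMonoid R] [LinearOrder R] [IsOrderedCancelAddMonoid R]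
    {x : Finset ι → R} {c : R} (hx : IsBalancedWeight x c) (hnonneg : 0 ≤ x) {I : Finset ι}
    (hI : I.Nonempty) (hxI : x I ≠ 0) : 0 < c := by
  obtain ⟨i, hi⟩ := hI
  rw [← hx i]
  exact sum_pos' (fun J _ => hnonneg J) ⟨I, by simp [hi], (hnonneg I).lt_of_ne' hxI⟩

theorem exists_nat_mul_eq_of_linearIndepOn_support {x : Finset ι → ℝ} {c : ℝ}
    (hx : IsBalancedWeight x c) (hnonneg : 0 ≤ x) (hc : 0 < c)
    (hli : LinearIndepOn ℝ (membershipMatrix ι ℝ).col (support x)) :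
    ∃ (v : Finset ι → ℕ) (d : ℕ), d ≠ 0 ∧ (d : ℝ) ≤ unitIntervalDetBound (Fintype.card ι) ∧
      ∀ I, d * x I = c * v I := by
  obtain ⟨e, hxe, hunit⟩ :=
    exists_embedding_isUnit_submatrix span_range_col_membershipMatrix hli
  set B := (membershipMatrix ι ℤ).submatrix id e
  have hdet : ((membershipMatrix ι ℝ).submatrix id e).det = B.det := by
    rw [← map_membershipMatrix (Int.castRingHom ℝ), submatrix_map]
    exact ((Int.castRingHom ℝ).map_det B).symm
  have cramer (I : Finset ι) : ∃ k : ℤ, B.det * x I = c * k :=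
    exists_map_det_submatrix_mul_eq (Int.castRingHom ℝ) (b := 1)
      (by rw [map_membershipMatrix, isBalancedWeight_iff_mulVec.1 hx]; ext; simp) hxe I
  choose k hk using cramer
  refine ⟨fun I => (k I).natAbs, B.det.natAbs, ?_, ?_, fun I => ?_⟩
  · rw [isUnit_iff_isUnit_det, hdet, isUnit_iff_ne_zero] at hunit
    exact Int.natAbs_ne_zero.2 (mod_cast hunit)
  · rw [Nat.cast_natAbs, Int.cast_abs, ← hdet]
    refine abs_det_le_unitIntervalDetBound fun i j => ?_
    rw [submatrix_apply, membershipMatrix_apply]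
    split_ifs <;> simp
  · simpa [Nat.cast_natAbs, abs_mul, abs_of_pos hc, abs_of_nonneg (hnonneg I)]
      using congrArg abs (hk I)

theorem exists_nat_complexity_le_support_subset {x : Finset ι → ℝ} {c : ℝ}
    (hx : IsBalancedWeight x c) (hnonneg : 0 ≤ x) (hne : x ≠ 0) :
    ∃ (v : Finset ι → ℕ) (d : ℕ), IsBalancedWeight v d ∧
      (d : ℝ) ≤ unitIntervalDetBound (Fintype.card ι) ∧ v ≠ 0 ∧ support v ⊆ support x := by
  by_cases hempty : x ∅ = 0
  · obtain ⟨I, hxI⟩ := Function.ne_iff.1 hne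
    have hI : I.Nonempty := nonempty_iff_ne_empty.2 fun h => hxI (h ▸ hempty)
    have hc : 0 < c := hx.complexity_pos hnonneg hI hxI
    obtain ⟨y, hy_nonneg, hyx, hy, hli⟩ :=
      exists_nonneg_linearIndepOn_support (membershipMatrix ι ℝ).col hnonneg
    rw [isBalancedWeight_iff_linearCombination.1 hx,
      ← isBalancedWeight_iff_linearCombination] at hy
    obtain ⟨v, d, hd, hbound, hv⟩ := hy.exists_nat_mul_eq_of_linearIndepOn_support hy_nonneg hc hli
    have hvd : IsBalancedWeight v d := hy.of_mul_eq_mul hc.ne' hv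
    refine ⟨v, d, hvd, hbound, ?_, fun J hJ => hyx fun hyJ => hJ ?_⟩
    · rintro rfl
      obtain ⟨i, -⟩ := hI
      exact hd (by simpa using (hvd i).symm)
    · simpa [hyJ, hc.ne'] using hv J
  · refine ⟨Pi.single ∅ 1, 0, single_empty 1, ?_, by simp, ?_⟩
    · exact_mod_cast unitIntervalDetBound_nonneg _
    · rwa [Pi.support_single_of_ne one_ne_zero, Set.singleton_subset_iff]

theorem exists_nat_le_or_complexity_le [Nonempty ι] {x : Finset ι → ℝ} {c : ℝ}
    (hx : IsBalancedWeight x c) (hnonneg : 0 ≤ x) :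
    (∃ (v : Finset ι → ℕ) (d : ℕ), IsBalancedWeight v d ∧
      (d : ℝ) ≤ unitIntervalDetBound (Fintype.card ι) ∧ v ≠ 0 ∧ ∀ I, v I ≤ x I) ∨
    c ≤ (support x).ncard * unitIntervalDetBound (Fintype.card ι) := by
  induction hs : support x using WellFoundedLT.induction generalizing x c with
  | ind s ih =>
    subst hs
    rcases eq_or_ne x 0 with rfl | hne
    · right
      simp [← hx (Classical.arbitrary ι)]
    obtain ⟨v, d, hv, hd, hv_ne, hvx⟩ := hx.exists_nat_complexity_le_support_subset hnonneg hne
    let y : Finset ι → ℝ := fun I => v I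
    obtain ⟨I, hI⟩ := Function.ne_iff.1 hv_ne
    obtain ⟨t, ht, hnonneg', hlt⟩ := exists_sub_smul_nonneg_support_ssubset (y := y) hnonneg
      (by simpa [y, support] using hvx) ⟨I, by simpa [y, Nat.pos_iff_ne_zero] using hI⟩
    rcases le_or_gt 1 t with ht1 | ht1
    · left
      exact ⟨v, d, hv, hd, hv_ne, fun J => (le_mul_of_one_le_left (Nat.cast_nonneg _) ht1).trans
        (sub_nonneg.1 (hnonneg' J))⟩
    rcases ih _ hlt (hx.sub_smul hv.natCast t) hnonneg' rfl with
      ⟨w, d', hw, hd', hw_ne, hwx⟩ | hle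
    · left
      exact ⟨w, d', hw, hd', hw_ne, fun J => (hwx J).trans
        (sub_le_self _ (mul_nonneg ht (Nat.cast_nonneg _)))⟩
    · right
      have hcard : ((support (x - t • y)).ncard : ℝ) + 1 ≤ (support x).ncard :=
        mod_cast Set.ncard_lt_ncard hlt
      have htd : t * d ≤ unitIntervalDetBound (Fintype.card ι) :=
        (mul_le_of_le_one_left (Nat.cast_nonneg _) ht1.le).trans hd
      calc c = (c - t * d) + t * d := by ring
        _ ≤ (support (x - t • y)).ncard * unitIntervalDetBound (Fintype.card ι) +
            unitIntervalDetBound (Fintype.card ι) := add_le_add hle htd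
        _ = ((support (x - t • y)).ncard + 1) * unitIntervalDetBound (Fintype.card ι) := by ring
        _ ≤ (support x).ncard * unitIntervalDetBound (Fintype.card ι) := by
          gcongr
          exact unitIntervalDetBound_nonneg _

end IsBalancedWeight

end BalancedWeights

section Multisets

variable {N : ℕ} {M : Multiset (Finset (Fin N))} {m : ℕ}

theorem balancedMultiset_iff_isBalancedWeight_count :
    BalancedMultiset M m ↔ IsBalancedWeight (fun I => M.count I) m := by
  refine forall_congr' fun i => ?_
  rw [← Multiset.sum_count_eq_card (s := univ) fun _ _ => mem_univ _, sum_filter]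
  simp_rw [Multiset.count_filter]

theorem ZIrreducible.eq_count_of_le_count (hirr : ZIrreducible M) {v : Finset (Fin N) → ℕ} {d : ℕ}
    (hv : IsBalancedWeight v d) (hne : v ≠ 0) (hle : ∀ I, v I ≤ M.count I) :
    v = fun I => M.count I := by
  let V : Multiset (Finset (Fin N)) := Finsupp.toMultiset (Finsupp.equivFunOnFinite.symm v)
  have hV : (fun I => V.count I) = v := by
    ext I
    simp [V]
  have hVM : V = M := by
    by_contra hVM
    refine hirr.2 V (Multiset.le_iff_count.2 fun I => ?_) ?_ hVM
      ⟨d, balancedMultiset_iff_isBalancedWeight_count.2 (hV ▸ hv)⟩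
    · exact (congrFun hV I).trans_le (hle I)
    · intro h0
      exact hne (by rw [← hV, h0]; rfl)
  rw [← hV, hVM]

end Multisets

/-- If `M` is a `ℤ`-irreducible balanced multiset of subsets of `[N]` with complexity
`m`, then `m ≤ (N+1)^{(N+1)/2}`. -/
theorem complexity_of_Z_irreducible_multiset {N : ℕ} (hN : 1 ≤ N)
    (M : Multiset (Finset (Fin N))) (m : ℕ)
    (hbal : BalancedMultiset M m) (hirr : ZIrreducible M) :
    (m : ℝ) ≤ ((N : ℝ) + 1) ^ (((N : ℝ) + 1) / 2) := by
  have : NeZero N := ⟨by omega⟩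
  have hM := balancedMultiset_iff_isBalancedWeight_count.1 hbal
  suffices h : (m : ℝ) ≤ 2 ^ N * unitIntervalDetBound N by
    rwa [unitIntervalDetBound, mul_div_cancel₀ _ (by positivity)] at h
  rcases hM.natCast.exists_nat_le_or_complexity_le (fun I => Nat.cast_nonneg _) with
    ⟨v, d, hv, hd, hne, hle⟩ | hle
  · have hmd : m = d := by
      rw [← hM 0, ← hv 0, hirr.eq_count_of_le_count hv hne (mod_cast hle)]
    rw [Fintype.card_fin] at hd
    rw [hmd]
    exact hd.trans (le_mul_of_one_le_left (unitIntervalDetBound_nonneg N) (one_le_pow₀ one_le_two))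
  · have hcard : (support fun I => (M.count I : ℝ)).ncard ≤ 2 ^ N := by
      simpa using Set.ncard_le_card (support fun I => (M.count I : ℝ))
    rw [Fintype.card_fin] at hle
    exact hle.trans (mul_le_mul_of_nonneg_right (mod_cast hcard) (unitIntervalDetBound_nonneg N))
end

section
/- The number of equivalence classes of irreducible supermodular functions on 2^[n] is at most the binomial coefficient C(n²·2^n, 2^n). -/
/-- A function on subsets of `[n]` is supermodular if
`f (I ∩ J) + f (I ∪ J) ≥ f I + f J` for all `I, J`. -/
def Supermodular {n : ℕ} (f : Finset (Fin n) → ℝ) : Prop :=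
  ∀ I J : Finset (Fin n), f I + f J ≤ f (I ∩ J) + f (I ∪ J)

/-- A function on subsets of `[n]` is modular if
`f (I ∩ J) + f (I ∪ J) = f I + f J` for all `I, J`. -/
def Modular {n : ℕ} (f : Finset (Fin n) → ℝ) : Prop :=
  ∀ I J : Finset (Fin n), f (I ∩ J) + f (I ∪ J) = f I + f J

/-- A supermodular function is irreducible if it is not modular and whenever it is a
sum of two supermodular functions, each summand is equivalent (i.e. differs by a
modular function) from `c • f` for some `c ≥ 0`. -/
def IrreducibleSupermodular {n : ℕ} (f : Finset (Fin n) → ℝ) : Prop :=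
  Supermodular f ∧ ¬ Modular f ∧
  ∀ g₁ g₂ : Finset (Fin n) → ℝ, Supermodular g₁ → Supermodular g₂ → f = g₁ + g₂ →
    (∃ c : ℝ, 0 ≤ c ∧ Modular (g₁ - c • f)) ∧ (∃ c : ℝ, 0 ≤ c ∧ Modular (g₂ - c • f))

/-- The type of irreducible supermodular functions on `2^[n]` up to equivalence
(two irreducible supermodular functions are identified when they agree up to a
modular function and a positive scaling, i.e. when they determine the same
equivalence class). -/
def IrreducibleSupermodularClasses (n : ℕ) : Type :=
  Quot (fun f g : {f : Finset (Fin n) → ℝ // IrreducibleSupermodular f} =>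
    ∃ c : ℝ, 0 < c ∧ Modular (f.1 - c • g.1))

/-!
Supermodularity on `2^[n]` amounts to the nonnegativity of `n² · 2ⁿ` local functionals
`f ↦ f (I ∩ J) + f (I ∪ J) - f I - f J`, where `I = S ∪ {i}` and `J = S ∪ {j}`. The supermodular
functions thus form a polyhedral cone whose extreme rays, modulo the lineality space of modular
functions, are the classes of irreducible ones. If `f` is irreducible and `g` is supermodular and
vanishes under every local functional that vanishes on `f`, then `f - ε g` is still supermodular for
small `ε > 0`, so `g` is equivalent to a multiple of `f`. Hence `f` is determined up to equivalence
by the local functionals vanishing on it, and already by any subset of these with the same span. As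
all functionals live in a space of dimension `2ⁿ`, this subset can be chosen of size exactly `2ⁿ`:
the zero functionals indexed by `(i, i, S)` ensure that it can be padded.
-/

open Finset Module

section Counting

theorem card_quot_le_of_forall_eq_imp {α β : Type*} [Finite β] {r : α → α → Prop} (φ : α → β)
    (hφ : ∀ a b, φ a = φ b → r a b) : Nat.card (Quot r) ≤ Nat.card β := by
  refine Nat.card_le_card_of_injective (fun q : Quot r => φ q.out) fun p q hpq => ?_
  rw [← p.out_eq, ← q.out_eq]
  exact Quot.sound (hφ _ _ hpq)

theorem card_quot_le_choose {α ι : Type*} [Fintype ι] {r : α → α → Prop} {k : ℕ}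
    (C : α → Finset ι) (hcard : ∀ a, #(C a) = k) (hC : ∀ a b, C a = C b → r a b) :
    Nat.card (Quot r) ≤ (Fintype.card ι).choose k :=
  calc Nat.card (Quot r)
      ≤ Nat.card {s : Finset ι // #s = k} :=
        card_quot_le_of_forall_eq_imp (fun a => ⟨C a, hcard a⟩) fun a b hab =>
          hC a b (congrArg Subtype.val hab)
    _ = (Fintype.card ι).choose k := by
        rw [Nat.card_eq_fintype_card, Fintype.card_finset_len]

end Counting

section LinearAlgebra

theorem exists_subset_card_eq_span_image_eq {K V ι : Type*} [DivisionRing K] [AddCommGroup V]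
    [Module K V] (v : ι → V) (T : Finset ι) {k : ℕ} (hk : Set.finrank K (v '' T) ≤ k)
    (hkT : k ≤ #T) :
    ∃ C ⊆ T, #C = k ∧ Submodule.span K (v '' C) = Submodule.span K (v '' T) := by
  obtain ⟨B, hBT, -, hTB, hB⟩ :=
    exists_linearIndepOn_extension (linearIndepOn_empty K v) (Set.empty_subset (T : Set ι))
  lift B to Finset ι using T.finite_toSet.subset hBT
  have hspan : Submodule.span K (v '' B) = Submodule.span K (v '' T) :=
    (Submodule.span_mono (Set.image_mono hBT)).antisymm (Submodule.span_le.2 hTB)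
  have hBcard : #B = Set.finrank K (v '' T) := by
    rw [Set.finrank, ← hspan, Set.image_eq_range]
    simpa using (finrank_span_eq_card hB).symm
  obtain ⟨C, hBC, hCT, hCcard⟩ :=
    exists_subsuperset_card_eq (Finset.coe_subset.1 hBT) (hBcard.trans_le hk) hkT
  refine ⟨C, hCT, hCcard, (Submodule.span_mono (by gcongr)).antisymm ?_⟩
  exact hspan.ge.trans (Submodule.span_mono (by gcongr))

theorem exists_pos_forall_le_mul {K ι : Type*} [Field K] [LinearOrder K] [IsStrictOrderedRing K]
    [Finite ι] {a b : ι → K} (ha : ∀ i, 0 ≤ a i) (hab : ∀ i, a i = 0 → b i ≤ 0) :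
    ∃ M, 0 < M ∧ ∀ i, b i ≤ M * a i := by
  have hlarge : ∀ i, ∀ᶠ M in Filter.atTop, b i ≤ M * a i := fun i => by
    rcases (ha i).eq_or_lt with hzero | hpos
    · simp [← hzero, hab i hzero.symm]
    · filter_upwards [Filter.eventually_ge_atTop (b i / a i)] with M hM
      exact (div_le_iff₀ hpos).1 hM
  exact ((Filter.eventually_gt_atTop 0).and (Filter.eventually_all.2 hlarge)).exists

end LinearAlgebra

section LocalCriterion

variable {α G : Type*} [DecidableEq α] [AddCommGroup G] [PartialOrder G] [IsOrderedAddMonoid G]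
  {f : Finset α → G}

/-- The supermodular inequality restricted to pairs `S ∪ {i}`, `S ∪ {j}` of sets covering their
intersection `S`. -/
def LocallySupermodular (f : Finset α → G) : Prop :=
  ∀ ⦃i j : α⦄ ⦃S : Finset α⦄, i ∉ S → j ∉ S → i ≠ j →
    f (insert i S) + f (insert j S) ≤ f S + f (insert i (insert j S))

/- Erasing `i` in the second term makes the marginal value of `i` monotone on all sets, not only on
those that avoid `i`, so that no side condition obstructs the induction in the next lemma. -/
theorem LocallySupermodular.monotone_insert_sub_erase (h : LocallySupermodular f) (i : α) :
    Monotone fun S => f (insert i S) - f (S.erase i) := by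
  refine monotone_iff_forall_le_insert.2 fun S j hj => ?_
  rcases eq_or_ne i j with rfl | hij
  · simp [erase_eq_of_notMem hj]
  · have hlocal := h (notMem_erase i S) (mt mem_of_mem_erase hj) hij
    have hi : insert i (S.erase i) = insert i S := by grind
    have hij_insert : insert i (insert j (S.erase i)) = insert i (insert j S) := by grind
    rw [hi, hij_insert, add_comm (f (S.erase i))] at hlocal
    simpa only [erase_insert_of_ne hij.symm, sub_le_sub_iff] using hlocal

theorem LocallySupermodular.monotone_union_sub_sdiff (h : LocallySupermodular f) (A : Finset α) :
    Monotone fun S => f (S ∪ A) - f (S \ A) := by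
  induction A using Finset.induction_on with
  | empty => simpa using monotone_const
  | insert a A ha ih =>
    have hinsert : Monotone fun S => f (insert a (S ∪ A)) - f ((S ∪ A).erase a) :=
      (h.monotone_insert_sub_erase a).comp fun S T hST => union_subset_union_left hST
    have herase : Monotone fun S : Finset α => f (S.erase a ∪ A) - f (S.erase a \ A) :=
      ih.comp fun S T hST => erase_subset_erase a hST
    convert hinsert.add herase using 2 with S
    have hunion : (S ∪ A).erase a = S.erase a ∪ A := by grind
    have hsdiff : S \ insert a A = S.erase a \ A := by grind
    rw [union_insert, hunion, hsdiff, sub_add_sub_cancel]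

theorem LocallySupermodular.add_le_inter_add_union (h : LocallySupermodular f) (I J : Finset α) :
    f I + f J ≤ f (I ∩ J) + f (I ∪ J) := by
  have hmono : f (I ∩ J ∪ J \ I) - f ((I ∩ J) \ (J \ I)) ≤ f (I ∪ J \ I) - f (I \ (J \ I)) :=
    h.monotone_union_sub_sdiff (J \ I) inter_subset_left
  have hJ : I ∩ J ∪ J \ I = J := by grind
  have hinter : (I ∩ J) \ (J \ I) = I ∩ J := by grind
  have hI : I \ (J \ I) = I := by grind
  rw [hJ, hinter, union_sdiff_self_eq_union, hI, sub_le_sub_iff] at hmono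
  rwa [add_comm (f I), add_comm (f (I ∩ J))]

end LocalCriterion

section Defect

/-- The linear functional `f ↦ f (I ∩ J) + f (I ∪ J) - f I - f J`, whose sign and vanishing at all
pairs `I`, `J` express that `f` is supermodular or modular. -/
noncomputable def supermodularDefect {α : Type*} [DecidableEq α] (I J : Finset α) :
    Dual ℝ (Finset α → ℝ) :=
  .proj (I ∩ J) + .proj (I ∪ J) - .proj I - .proj J

theorem supermodularDefect_apply {α : Type*} [DecidableEq α] (I J : Finset α)
    (f : Finset α → ℝ) :
    supermodularDefect I J f = f (I ∩ J) + f (I ∪ J) - f I - f J := rfl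

variable {n : ℕ} {f : Finset (Fin n) → ℝ}

theorem supermodular_iff_supermodularDefect_nonneg :
    Supermodular f ↔ ∀ I J, 0 ≤ supermodularDefect I J f := by
  simp only [Supermodular, supermodularDefect_apply, sub_sub, sub_nonneg]

theorem modular_iff_supermodularDefect_eq_zero :
    Modular f ↔ ∀ I J, supermodularDefect I J f = 0 := by
  simp only [Modular, supermodularDefect_apply, sub_sub, sub_eq_zero]

theorem Supermodular.smul (hf : Supermodular f) {c : ℝ} (hc : 0 ≤ c) : Supermodular (c • f) := by
  rw [supermodular_iff_supermodularDefect_nonneg] at hf ⊢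
  intro I J
  simpa only [map_smul] using smul_nonneg hc (hf I J)

theorem Modular.smul (hf : Modular f) (c : ℝ) : Modular (c • f) := by
  rw [modular_iff_supermodularDefect_eq_zero] at hf ⊢
  intro I J
  rw [map_smul, hf I J, smul_zero]

/-- The triples `(i, j, S)` indexing the local supermodularity inequalities. The degenerate cases
`i = j`, `i ∈ S` and `j ∈ S` are kept so that there are exactly `n² · 2ⁿ` of them. -/
abbrev LocalIndex (n : ℕ) : Type := Fin n × Fin n × Finset (Fin n)

theorem card_localIndex (n : ℕ) : Fintype.card (LocalIndex n) = n ^ 2 * 2 ^ n := by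
  simp [LocalIndex, sq, mul_assoc]

/-- The defect at the pair `S ∪ {i}`, `S ∪ {j}`, which vanishes if `(i, j, S)` is degenerate. -/
noncomputable def localDefect : LocalIndex n → Dual ℝ (Finset (Fin n) → ℝ)
  | (i, j, S) => supermodularDefect (insert i S) (insert j S)

theorem localDefect_diag (i : Fin n) (S : Finset (Fin n)) : localDefect (i, i, S) = 0 := by
  ext f
  simp [localDefect, supermodularDefect_apply]

theorem supermodular_iff_localDefect_nonneg :
    Supermodular f ↔ ∀ t, 0 ≤ localDefect t f := by
  refine ⟨fun hf t => supermodular_iff_supermodularDefect_nonneg.1 hf _ _, fun h => ?_⟩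
  refine LocallySupermodular.add_le_inter_add_union fun i j S _ _ hij => ?_
  have hinter : insert i S ∩ insert j S = S := by grind
  have hunion : insert i S ∪ insert j S = insert i (insert j S) := by grind
  have hlocal := h (i, j, S)
  simp only [localDefect, supermodularDefect_apply, hinter, hunion] at hlocal
  linarith

end Defect

section Rigidity

variable {n : ℕ} {f g : Finset (Fin n) → ℝ}

/-- The indices of the local supermodularity inequalities that hold with equality at `f`; for
supermodular `f` they cut out the smallest face of the supermodular cone containing `f`. -/
noncomputable def tightIndices (f : Finset (Fin n) → ℝ) : Finset (LocalIndex n) :=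
  {t | localDefect t f = 0}

theorem mem_tightIndices {t : LocalIndex n} : t ∈ tightIndices f ↔ localDefect t f = 0 := by
  simp [tightIndices]

theorem IrreducibleSupermodular.exists_modular_sub_smul (hf : IrreducibleSupermodular f)
    (hg : Supermodular g) (hg_not_modular : ¬ Modular g)
    (hfg : tightIndices f ⊆ tightIndices g) :
    ∃ c : ℝ, 0 < c ∧ Modular (g - c • f) := by
  obtain ⟨M, hM, hle⟩ := exists_pos_forall_le_mul (supermodular_iff_localDefect_nonneg.1 hf.1)
    fun t ht => (mem_tightIndices.1 (hfg (mem_tightIndices.2 ht))).le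
  have hrest : Supermodular (f - M⁻¹ • g) := by
    refine supermodular_iff_localDefect_nonneg.2 fun t => ?_
    rw [map_sub, map_smul, smul_eq_mul, sub_nonneg]
    exact (inv_mul_le_iff₀ hM).2 (hle t)
  obtain ⟨-, c, hc, hmod⟩ := hf.2.2 _ _ hrest (hg.smul (inv_nonneg.2 hM.le))
    (sub_add_cancel _ _).symm
  have hscaled : Modular (g - (M * c) • f) := by
    simpa [smul_sub, smul_smul, hM.ne'] using hmod.smul M
  refine ⟨M * c, mul_pos hM (hc.lt_of_ne' ?_), hscaled⟩
  rintro rfl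
  exact hg_not_modular (by simpa using hscaled)

theorem two_pow_le_card_tightIndices (hn : 1 ≤ n) (f : Finset (Fin n) → ℝ) :
    2 ^ n ≤ #(tightIndices f) := by
  have i : Fin n := ⟨0, hn⟩
  calc 2 ^ n = #(univ : Finset (Finset (Fin n))) := by simp
    _ ≤ #(tightIndices f) :=
      card_le_card_of_injOn (fun S => (i, i, S))
        (fun S _ => mem_tightIndices.2 (by simp [localDefect_diag])) (by simp [Set.InjOn])

theorem localDefect_eq_zero_of_mem_span {C : Finset (LocalIndex n)} (hC : C ⊆ tightIndices g)
    {t : LocalIndex n} (ht : localDefect t ∈ Submodule.span ℝ (localDefect '' C)) :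
    localDefect t g = 0 := by
  have hker : Submodule.span ℝ (localDefect '' C) ≤ LinearMap.ker (Dual.eval ℝ _ g) := by
    rw [Submodule.span_le, Set.image_subset_iff]
    exact fun s hs => mem_tightIndices.1 (hC hs)
  exact hker ht

theorem exists_subset_tightIndices_determining (hn : 1 ≤ n) (f : Finset (Fin n) → ℝ) :
    ∃ C ⊆ tightIndices f, #C = 2 ^ n ∧
      ∀ g, C ⊆ tightIndices g → tightIndices f ⊆ tightIndices g := by
  have hdim : Set.finrank ℝ (localDefect '' (tightIndices f : Set (LocalIndex n))) ≤ 2 ^ n :=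
    calc finrank ℝ (Submodule.span ℝ (localDefect '' (tightIndices f : Set (LocalIndex n))))
        ≤ finrank ℝ (Dual ℝ (Finset (Fin n) → ℝ)) := Submodule.finrank_le _
      _ = 2 ^ n := by simp [Subspace.dual_finrank_eq]
  obtain ⟨C, hC, hcard, hspan⟩ := exists_subset_card_eq_span_image_eq localDefect
    (tightIndices f) hdim (two_pow_le_card_tightIndices hn f)
  refine ⟨C, hC, hcard, fun g hg t ht => ?_⟩
  refine mem_tightIndices.2 (localDefect_eq_zero_of_mem_span hg ?_)
  rw [hspan]
  exact Submodule.subset_span ⟨t, ht, rfl⟩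

end Rigidity

/-- The number of equivalence classes of irreducible supermodular functions on `2^[n]`
is at most the binomial coefficient `C(n²·2^n, 2^n)`. -/
theorem count_irreducible_supermodular_upper {n : ℕ} (hn : 1 ≤ n) :
    Nat.card (IrreducibleSupermodularClasses n) ≤ (n ^ 2 * 2 ^ n).choose (2 ^ n) := by
  choose C hC_tight hC_card hC_determining using
    fun f : {f : Finset (Fin n) → ℝ // IrreducibleSupermodular f} =>
      exists_subset_tightIndices_determining hn f.1
  have hequiv (f g) (hfg : C f = C g) : ∃ c : ℝ, 0 < c ∧ Modular (f.1 - c • g.1) :=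
    g.2.exists_modular_sub_smul f.2.1 f.2.2.1 (hC_determining g f.1 (hfg ▸ hC_tight f))
  rw [← card_localIndex]
  exact card_quot_le_choose C hC_card hequiv
end

section
/- Let f be an irreducible supermodular function on 2^[n]. Then the complexity of f is at most 2^{n²·2^n}. -/
/-- A pair `{I, J}` of subsets of `[n]` is close if
`|I| = |J| = |I ∩ J| + 1 = |I ∪ J| − 1`. -/
def ClosePair {n : ℕ} (I J : Finset (Fin n)) : Prop :=
  I.card = J.card ∧ I.card = (I ∩ J).card + 1 ∧ I.card + 1 = (I ∪ J).card

instance {n : ℕ} (I J : Finset (Fin n)) : Decidable (ClosePair I J) := by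
  unfold ClosePair; infer_instance

/-- `I_r(σ) = {σ₁, …, σ_r}` (in `0`-indexed form, `{σ 0, …, σ (r-1)}`). -/
def Iset {n : ℕ} (σ : Equiv.Perm (Fin n)) (r : ℕ) : Finset (Fin n) :=
  Finset.univ.filter (fun x => (σ.symm x : ℕ) < r)

/-- `J_r(σ) = {σ₂, …, σ_{r+1}}` (in `0`-indexed form, `{σ 1, …, σ r}`). -/
def Jset {n : ℕ} (σ : Equiv.Perm (Fin n)) (r : ℕ) : Finset (Fin n) :=
  Finset.univ.filter (fun x => 1 ≤ (σ.symm x : ℕ) ∧ (σ.symm x : ℕ) < r + 1)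

/-- The path sum of `s` along the permutation `σ`: `P_σ(s) = Σ_{r=1}^{n-1} s_{I_r, J_r}`. -/
def pathSumZ {n : ℕ} (σ : Equiv.Perm (Fin n)) (s : Finset (Fin n) → Finset (Fin n) → ℤ) : ℤ :=
  ∑ r ∈ Finset.Icc 1 (n - 1), s (Iset σ r) (Jset σ r)

open Finset Matrix

section IntegerKernel

open scoped Matrix.Norms.Elementwise

theorem exists_int_mulVec_eq_zero_abs_le {α β : Type*} [Fintype α] [Fintype β]
    (A : Matrix α β ℤ) (hcard : Fintype.card α < Fintype.card β) {C : ℤ} (hC : 1 ≤ C)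
    (hA : ∀ i j, |A i j| ≤ C) :
    ∃ t : β → ℤ, t ≠ 0 ∧ A *ᵥ t = 0 ∧ ∀ j, |t j| ≤ (Fintype.card β * C) ^ Fintype.card α := by
  have : Nonempty β := Fintype.card_pos_iff.1 (by omega)
  rcases (Fintype.card α).eq_zero_or_pos with hα | hα
  · have : IsEmpty α := Fintype.card_eq_zero_iff.1 hα
    exact ⟨1, one_ne_zero, Subsingleton.elim _ _, by simp⟩
  obtain ⟨t, ht, hAt, hnorm⟩ := Int.Matrix.exists_ne_zero_int_vec_norm_le A hcard hα
  refine ⟨t, ht, hAt, fun j => ?_⟩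
  have hC' : (1 : ℝ) ≤ C := mod_cast hC
  have hAC : ‖A‖ ≤ C := (norm_le_iff (by positivity)).2 fun i j => by
    rw [Int.norm_eq_abs]
    exact_mod_cast hA i j
  have hcard' : (Fintype.card α : ℝ) + 1 ≤ Fintype.card β := mod_cast hcard
  have hexp : (Fintype.card α : ℝ) / (Fintype.card β - Fintype.card α) ≤ Fintype.card α :=
    div_le_self (Nat.cast_nonneg _) (by linarith)
  have hbase : 1 ≤ (Fintype.card β : ℝ) * C :=
    one_le_mul_of_one_le_of_one_le (by linarith [(Fintype.card α).cast_nonneg (α := ℝ)]) hC'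
  have hbound : ‖t j‖ ≤ ((Fintype.card β : ℝ) * C) ^ Fintype.card α := by
    calc ‖t j‖ ≤ ‖t‖ := norm_le_pi_norm t j
      _ ≤ _ := hnorm
      _ ≤ ((Fintype.card β : ℝ) * C) ^
          ((Fintype.card α : ℝ) / (Fintype.card β - Fintype.card α)) := by
        refine Real.rpow_le_rpow (by positivity) ?_ (div_nonneg (by positivity) (by linarith))
        gcongr
        exact max_le hC' hAC
      _ ≤ ((Fintype.card β : ℝ) * C) ^ (Fintype.card α : ℝ) :=
        Real.rpow_le_rpow_of_exponent_le hbase hexp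
      _ = _ := Real.rpow_natCast _ _
  rw [Int.norm_eq_abs] at hbound
  exact_mod_cast hbound

end IntegerKernel

section Rank

variable {ι β K : Type*} [Fintype β] [Field K]

theorem rank_lt_card_of_mulVec_eq_zero (A : Matrix ι β K) {x : β → K} (hx : x ≠ 0)
    (hAx : A *ᵥ x = 0) : A.rank < Fintype.card β := by
  have hker : A.mulVecLin.ker ≠ ⊥ := fun h => hx <| by
    simpa [h] using (LinearMap.mem_ker (f := A.mulVecLin)).2 hAx
  have hpos := Submodule.one_le_finrank_iff.2 hker
  have hsum := A.mulVecLin.finrank_range_add_finrank_ker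
  rw [Module.finrank_fintype_fun_eq_card] at hsum
  rw [Matrix.rank]
  omega

theorem exists_submatrix_mulVec_eq_zero_imp [Finite ι] (A : Matrix ι β K) :
    ∃ a : Fin A.rank → ι, ∀ y, A.submatrix a id *ᵥ y = 0 → A *ᵥ y = 0 := by
  obtain ⟨v, hv, hspan, -⟩ := Submodule.exists_fun_fin_finrank_span_eq K (Set.range A.row)
  choose a ha using hv
  rw [A.rank_eq_finrank_span_row]
  refine ⟨a, fun y hy => funext fun i => ?_⟩
  have hle : Submodule.span K (Set.range v) ≤ ((dotProductBilin K K).flip y).ker := by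
    rw [Submodule.span_le]
    rintro _ ⟨k, rfl⟩
    rw [← ha k]
    exact congrFun hy k
  rw [hspan] at hle
  exact hle (Submodule.subset_span ⟨i, rfl⟩)

theorem exists_int_mulVec_eq_zero_abs_le_of_rank_lt [CharZero K] [Finite ι] (A : Matrix ι β ℤ)
    (hrank : (A.map ((↑) : ℤ → K)).rank < Fintype.card β) {C : ℤ} (hC : 1 ≤ C)
    (hA : ∀ i j, |A i j| ≤ C) :
    ∃ t : β → ℤ, t ≠ 0 ∧ A *ᵥ t = 0 ∧
      ∀ j, |t j| ≤ (Fintype.card β * C) ^ (A.map ((↑) : ℤ → K)).rank := by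
  obtain ⟨a, ha⟩ := exists_submatrix_mulVec_eq_zero_imp (A.map ((↑) : ℤ → K))
  obtain ⟨t, ht, hAt, hbound⟩ := exists_int_mulVec_eq_zero_abs_le (A.submatrix a id)
    (by simpa using hrank) hC fun i j => hA (a i) j
  have hcast : A.map ((↑) : ℤ → K) *ᵥ (fun j => (t j : K)) = 0 := ha _ <| funext fun k => by
    simpa [mulVec, dotProduct] using congrArg ((↑) : ℤ → K) (congrFun hAt k)
  refine ⟨t, ht, funext fun i => ?_, by simpa using hbound⟩
  have := congrFun hcast i
  simp only [mulVec, dotProduct, map_apply, Pi.zero_apply] at this ⊢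
  exact_mod_cast this

end Rank

section PrimitiveVector

theorem dvd_of_gcd_eq_one_of_mul_eq_mul {α R : Type*} [CommMonoidWithZero R]
    [StrongNormalizedGCDMonoid R] {S : Finset α} {s T : α → R} (hgcd : S.gcd s = 1) {p : α}
    (h : ∀ q ∈ S, T p * s q = s p * T q) : s p ∣ T p := by
  have : s p ∣ S.gcd fun q => T p * s q := dvd_gcd fun q hq => ⟨T q, h q hq⟩
  rwa [Finset.gcd_mul_left, hgcd, mul_one, dvd_normalize_iff] at this

theorem abs_le_abs_of_gcd_eq_one_of_cast_eq_mul {α K : Type*} [Field K] [CharZero K]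
    {S : Finset α} {s T : α → ℤ} (hgcd : S.gcd s = 1) {a : K} (ha : a ≠ 0)
    (h : ∀ p ∈ S, (T p : K) = a * s p) {p : α} (hp : p ∈ S) : |s p| ≤ |T p| := by
  by_cases hT : T p = 0
  · have : s p = 0 := by simpa [hT, ha] using (h p hp).symm
    simp [this, hT]
  have hdvd : s p ∣ T p := dvd_of_gcd_eq_one_of_mul_eq_mul hgcd fun q hq => by
    have : (T p * s q : K) = s p * T q := by rw [h p hp, h q hq]; ring
    exact_mod_cast this
  exact Int.le_of_dvd (abs_pos.2 hT) ((abs_dvd_abs _ _).2 hdvd)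

end PrimitiveVector

theorem exists_pos_forall_mul_abs_le {α K : Type*} [Finite α] [Field K] [LinearOrder K]
    [IsStrictOrderedRing K] {F H : α → K} (hF : ∀ p, 0 ≤ F p) (hH : ∀ p, F p = 0 → H p = 0) :
    ∃ ε, 0 < ε ∧ ∀ p, ε * |H p| ≤ F p := by
  obtain ⟨M, hM⟩ := (Set.finite_range fun p => |H p| / F p).bddAbove
  refine ⟨(max M 1)⁻¹, by positivity, fun p => ?_⟩
  rcases (hF p).eq_or_lt with h0 | hpos
  · simp [← h0, hH p h0.symm]
  · rw [inv_mul_le_iff₀ (by positivity), ← div_le_iff₀ hpos]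
    exact (hM ⟨p, rfl⟩).trans (le_max_left M 1)

section SupermodularityValue

variable {α R : Type*} [DecidableEq α]

/-- The supermodularity value `s_{I,J}` as a linear functional of the set function, i.e. the
`{I, J}`-coordinate of the map `T` (here for arbitrary `I` and `J`, close or not). -/
def supermodularityValue [Ring R] (I J : Finset α) : (Finset α → R) →ₗ[R] R where
  toFun f := f (I ∩ J) + f (I ∪ J) - f I - f J
  map_add' f g := by simp only [Pi.add_apply]; abel
  map_smul' a f := by
    simp only [Pi.smul_apply, smul_eq_mul, mul_add, mul_sub, RingHom.id_apply]

theorem supermodularityValue_apply [Ring R] (I J : Finset α) (f : Finset α → R) :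
    supermodularityValue I J f = f (I ∩ J) + f (I ∪ J) - f I - f J := rfl

theorem supermodularityValue_intCast [Ring R] (I J : Finset α) (t : Finset α → ℤ) :
    supermodularityValue I J (fun K => (t K : R)) = (supermodularityValue I J t : ℤ) := by
  simp [supermodularityValue_apply]

theorem abs_supermodularityValue_le [CommRing R] [LinearOrder R] [IsStrictOrderedRing R]
    {t : Finset α → R} {B : R} (ht : ∀ I, |t I| ≤ B) (I J : Finset α) :
    |supermodularityValue I J t| ≤ 4 * B := by
  have h₁ := abs_le.1 (ht (I ∩ J))
  have h₂ := abs_le.1 (ht (I ∪ J))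
  have h₃ := abs_le.1 (ht I)
  have h₄ := abs_le.1 (ht J)
  rw [supermodularityValue_apply, abs_le]
  constructor <;> linarith

theorem sum_supermodularityValue_single_mul [Fintype α] [CommRing R] (I J : Finset α)
    (y : Finset α → R) :
    ∑ K, ((supermodularityValue I J (Pi.single K 1) : ℤ) : R) * y K =
      supermodularityValue I J y := by
  simp [supermodularityValue_apply, Pi.single_apply, sub_mul, add_mul, sum_add_distrib]

end SupermodularityValue

section IncreasingDifferences

variable {α R : Type*} [DecidableEq α] [AddCommGroup R] [PartialOrder R]
  {g : Finset α → R}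

theorem insert_sub_le_insert_sub_of_subset
    (h : ∀ (A : Finset α) (x y : α), x ∉ A → y ∉ A → x ≠ y →
      g (insert x A) - g A ≤ g (insert x (insert y A)) - g (insert y A))
    {A B : Finset α} (hAB : A ⊆ B) {x : α} (hx : x ∉ B) :
    g (insert x A) - g A ≤ g (insert x B) - g B := by
  obtain ⟨D, rfl⟩ : ∃ D, A ∪ D = B := ⟨B, union_eq_right.2 hAB⟩
  clear hAB
  induction D using Finset.induction_on with
  | empty => simp
  | insert y D _ ih =>
    rw [union_insert] at hx ⊢
    by_cases hy : y ∈ A ∪ D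
    · rw [insert_eq_of_mem hy] at hx ⊢
      exact ih hx
    · rw [mem_insert, not_or] at hx
      exact (ih hx.2).trans (h _ _ _ hx.2 hy hx.1)

variable [IsOrderedAddMonoid R]

theorem union_sub_le_union_sub_of_subset
    (h : ∀ {A B : Finset α}, A ⊆ B → ∀ {x : α}, x ∉ B →
      g (insert x A) - g A ≤ g (insert x B) - g B)
    {A B : Finset α} (hAB : A ⊆ B) {C : Finset α} (hBC : Disjoint B C) :
    g (A ∪ C) - g A ≤ g (B ∪ C) - g B := by
  induction C using Finset.induction_on with
  | empty => simp
  | insert x C hx ih =>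
    rw [disjoint_insert_right] at hBC
    have hxBC : x ∉ B ∪ C := by simp [hx, hBC.1]
    rw [union_insert, union_insert]
    simpa using add_le_add (h (union_subset_union_left hAB) hxBC) (ih hBC.2)

theorem add_le_inter_add_union_of_insert
    (h : ∀ (A : Finset α) (x y : α), x ∉ A → y ∉ A → x ≠ y →
      g (insert x A) - g A ≤ g (insert x (insert y A)) - g (insert y A))
    (I J : Finset α) : g I + g J ≤ g (I ∩ J) + g (I ∪ J) := by
  have := union_sub_le_union_sub_of_subset (insert_sub_le_insert_sub_of_subset h)
    (inter_subset_right : I ∩ J ⊆ J) (disjoint_sdiff : Disjoint J (I \ J))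
  rw [show I ∩ J ∪ I \ J = I by grind, union_sdiff_self_eq_union, union_comm J,
    sub_le_sub_iff] at this
  rwa [add_comm (g (I ∩ J))]

end IncreasingDifferences

theorem insert_inter_insert_of_ne {α : Type*} [DecidableEq α] (A : Finset α) {x y : α}
    (hxy : x ≠ y) : insert x A ∩ insert y A = A := by
  grind

theorem insert_union_insert_eq_insert_insert {α : Type*} [DecidableEq α] (A : Finset α) (x y : α) :
    insert x A ∪ insert y A = insert x (insert y A) := by
  rw [insert_union, union_insert, union_self]

section ClosePair

variable {n : ℕ}

theorem closePair_insert {A : Finset (Fin n)} {x y : Fin n} (hx : x ∉ A) (hy : y ∉ A)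
    (hxy : x ≠ y) : ClosePair (insert x A) (insert y A) := by
  rw [ClosePair, insert_inter_insert_of_ne A hxy, insert_union_insert_eq_insert_insert,
    card_insert_of_notMem hx, card_insert_of_notMem hy, card_insert_of_notMem (by grind),
    card_insert_of_notMem hy]
  simp

theorem supermodular_of_closePair {g : Finset (Fin n) → ℝ}
    (h : ∀ I J, ClosePair I J → 0 ≤ supermodularityValue I J g) : Supermodular g := by
  refine add_le_inter_add_union_of_insert fun A x y hx hy hxy => ?_
  have hvalue := h _ _ (closePair_insert hx hy hxy)
  rw [supermodularityValue_apply, insert_inter_insert_of_ne A hxy,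
    insert_union_insert_eq_insert_insert] at hvalue
  linarith

theorem supermodular_add_of_closePair {f h : Finset (Fin n) → ℝ}
    (hle : ∀ I J, ClosePair I J → |supermodularityValue I J h| ≤ supermodularityValue I J f) :
    Supermodular (f + h) :=
  supermodular_of_closePair fun I J hIJ => by
    rw [map_add]
    linarith [(abs_le.1 (hle I J hIJ)).1]

end ClosePair

section PathSum

variable {n : ℕ} (σ : Equiv.Perm (Fin n)) {k : ℕ}

theorem Iset_succ_eq_insert (hk : k < n) :
    Iset σ (k + 1) = insert (σ ⟨0, by omega⟩) (Jset σ k) := by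
  ext x
  simp only [Iset, Jset, mem_filter_univ, mem_insert, ← Equiv.symm_apply_eq, Fin.ext_iff]
  omega

theorem Jset_succ_eq_insert (hk : k + 1 < n) :
    Jset σ (k + 1) = insert (σ ⟨k + 1, hk⟩) (Jset σ k) := by
  ext x
  simp only [Jset, mem_filter_univ, mem_insert, ← Equiv.symm_apply_eq, Fin.ext_iff]
  omega

theorem closePair_Iset_Jset (hk : k + 1 < n) : ClosePair (Iset σ (k + 1)) (Jset σ (k + 1)) := by
  rw [Iset_succ_eq_insert σ (by omega), Jset_succ_eq_insert σ hk]
  refine closePair_insert ?_ ?_ ?_ <;> simp [Jset]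

theorem pathSumZ_le {s : Finset (Fin n) → Finset (Fin n) → ℤ} {b : ℤ}
    (hs : ∀ I J, ClosePair I J → s I J ≤ b) : pathSumZ σ s ≤ (n - 1 : ℕ) * b := by
  have hterm : ∀ r ∈ Icc 1 (n - 1), s (Iset σ r) (Jset σ r) ≤ b := fun r hr => by
    obtain ⟨h1, hn⟩ := mem_Icc.1 hr
    obtain ⟨k, rfl⟩ := Nat.exists_eq_add_of_le' h1
    exact hs _ _ (closePair_Iset_Jset σ (by omega))
  simpa [pathSumZ] using sum_le_card_nsmul _ _ _ hterm

end PathSum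

theorem modular_iff_supermodularityValue_eq_zero {n : ℕ} {g : Finset (Fin n) → ℝ} :
    Modular g ↔ ∀ I J, supermodularityValue I J g = 0 := by
  simp only [Modular, supermodularityValue_apply, sub_sub, sub_eq_zero]

theorem Modular.eq_zero_of_card_le_one {n : ℕ} {g : Finset (Fin n) → ℝ} (hg : Modular g)
    (h0 : ∀ I : Finset (Fin n), #I ≤ 1 → g I = 0) : g = 0 := by
  funext I
  induction I using Finset.induction_on with
  | empty => exact h0 _ (by simp)
  | insert a s ha ih =>
    have := hg {a} s
    rw [singleton_inter_of_notMem ha, ← insert_eq, h0 ∅ (by simp), h0 {a} (by simp), ih] at this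
    simpa using this

theorem exists_modular_eq_of_card_le_one {n : ℕ} (f : Finset (Fin n) → ℝ) :
    ∃ L : Finset (Fin n) → ℝ, Modular L ∧ ∀ I : Finset (Fin n), #I ≤ 1 → L I = f I := by
  refine ⟨fun I => f ∅ + ∑ i ∈ I, (f {i} - f ∅), fun I J => ?_, fun I hI => ?_⟩
  · linarith [sum_union_inter (s₁ := I) (s₂ := J) (f := fun i => f {i} - f ∅)]
  · rcases Nat.le_one_iff_eq_zero_or_eq_one.1 hI with h | h
    · simp [card_eq_zero.1 h]
    · obtain ⟨i, rfl⟩ := card_eq_one.1 h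
      simp

theorem Supermodular.smul_s11 {n : ℕ} {f : Finset (Fin n) → ℝ} (hf : Supermodular f) {a : ℝ}
    (ha : 0 ≤ a) : Supermodular (a • f) := fun I J => by
  simpa [mul_add] using mul_le_mul_of_nonneg_left (hf I J) ha

theorem Modular.smul_s11 {n : ℕ} {f : Finset (Fin n) → ℝ} (hf : Modular f) (a : ℝ) :
    Modular (a • f) := fun I J => by
  simpa [mul_add] using congrArg (a * ·) (hf I J)

theorem Supermodular.supermodularityValue_nonneg {n : ℕ} {f : Finset (Fin n) → ℝ}
    (hf : Supermodular f) (I J : Finset (Fin n)) : 0 ≤ supermodularityValue I J f := by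
  rw [supermodularityValue_apply]
  linarith [hf I J]

theorem Supermodular.exists_pos_supermodular_add_smul {n : ℕ} {f h : Finset (Fin n) → ℝ}
    (hf : Supermodular f)
    (hh : ∀ I J, ClosePair I J → supermodularityValue I J f = 0 → supermodularityValue I J h = 0) :
    ∃ ε : ℝ, 0 < ε ∧ Supermodular (f + ε • h) ∧ Supermodular (f - ε • h) := by
  obtain ⟨ε, hε, hle⟩ := exists_pos_forall_mul_abs_le
    (α := {p : Finset (Fin n) × Finset (Fin n) // ClosePair p.1 p.2})
    (F := fun p => supermodularityValue p.1.1 p.1.2 f)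
    (H := fun p => supermodularityValue p.1.1 p.1.2 h)
    (fun p => hf.supermodularityValue_nonneg _ _) fun p => hh _ _ p.2
  have hbound : ∀ I J, ClosePair I J →
      |supermodularityValue I J (ε • h)| ≤ supermodularityValue I J f := fun I J hIJ => by
    rw [map_smul, smul_eq_mul, abs_mul, abs_of_pos hε]
    exact hle ⟨(I, J), hIJ⟩
  refine ⟨ε, hε, supermodular_add_of_closePair hbound, ?_⟩
  rw [sub_eq_add_neg]
  refine supermodular_add_of_closePair fun I J hIJ => ?_
  rw [map_neg, abs_neg]
  exact hbound I J hIJ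

theorem IrreducibleSupermodular.exists_modular_sub_smul_s11 {n : ℕ} {f h : Finset (Fin n) → ℝ}
    (hf : IrreducibleSupermodular f)
    (hh : ∀ I J, ClosePair I J → supermodularityValue I J f = 0 → supermodularityValue I J h = 0) :
    ∃ l : ℝ, Modular (h - l • f) := by
  obtain ⟨hsuper, -, hirr⟩ := hf
  obtain ⟨ε, hε, hplus, hminus⟩ := hsuper.exists_pos_supermodular_add_smul hh
  have hsum : f = (1 / 2 : ℝ) • (f + ε • h) + (1 / 2 : ℝ) • (f - ε • h) := by module
  obtain ⟨⟨c, -, hc⟩, -⟩ := hirr _ _ (hplus.smul_s11 (by norm_num)) (hminus.smul_s11 (by norm_num)) hsum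
  refine ⟨ε⁻¹ * (2 * c - 1), ?_⟩
  have hscale : h - (ε⁻¹ * (2 * c - 1)) • f =
      (2 * ε⁻¹) • ((1 / 2 : ℝ) • (f + ε • h) - c • f) := by
    match_scalars <;> field_simp
    ring
  rw [hscale]
  exact hc.smul_s11 _

/-- The integer matrix of the linear system satisfied by the set functions that vanish on sets with
at most one element and whose supermodularity value is zero at each close pair where that of `f`
is.  The columns are indexed by the coordinates of a set function; a functional is turned into a
row by evaluating it at the unit vectors. -/
noncomputable def tightMatrix {n : ℕ} (f : Finset (Fin n) → ℝ) :
    Matrix ({p : Finset (Fin n) × Finset (Fin n) //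
      ClosePair p.1 p.2 ∧ supermodularityValue p.1 p.2 f = 0} ⊕ {I : Finset (Fin n) // #I ≤ 1})
      (Finset (Fin n)) ℤ
  | .inl p, K => supermodularityValue p.1.1 p.1.2 (Pi.single K 1)
  | .inr I, K => (Pi.single K 1 : Finset (Fin n) → ℤ) I

section TightMatrix

variable {n : ℕ} (f : Finset (Fin n) → ℝ)

theorem abs_tightMatrix_le (i) (K : Finset (Fin n)) : |tightMatrix f i K| ≤ 4 := by
  have hsingle : ∀ I J : Finset (Fin n), |(Pi.single I 1 : Finset (Fin n) → ℤ) J| ≤ 1 :=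
    fun I J => by rw [Pi.single_apply]; split_ifs <;> simp
  rcases i with p | I
  · exact abs_supermodularityValue_le (hsingle K) _ _
  · exact (hsingle _ _).trans (by norm_num)

theorem tightMatrix_map_mulVec_eq_zero_iff {R : Type*} [CommRing R] (y : Finset (Fin n) → R) :
    (tightMatrix f).map (↑) *ᵥ y = 0 ↔
      (∀ I J, ClosePair I J → supermodularityValue I J f = 0 → supermodularityValue I J y = 0) ∧
        ∀ I : Finset (Fin n), #I ≤ 1 → y I = 0 := by
  have hinl (p) : ((tightMatrix f).map (↑) *ᵥ y) (.inl p) = supermodularityValue p.1.1 p.1.2 y :=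
    sum_supermodularityValue_single_mul p.1.1 p.1.2 y
  have hinr (I) : ((tightMatrix f).map (↑) *ᵥ y) (.inr I) = y I.1 := by
    simp [mulVec, dotProduct, tightMatrix, Pi.single_apply]
  simp [funext_iff, hinl, hinr]

end TightMatrix

theorem exists_int_tight_abs_le {n : ℕ} {f : Finset (Fin n) → ℝ} (hf : ¬ Modular f) :
    ∃ t : Finset (Fin n) → ℤ, t ≠ 0 ∧ (∀ I : Finset (Fin n), #I ≤ 1 → t I = 0) ∧
      (∀ I J, ClosePair I J → supermodularityValue I J f = 0 → supermodularityValue I J t = 0) ∧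
      ∀ I, |t I| ≤ (2 ^ n * 4) ^ (2 ^ n - 1) := by
  obtain ⟨L, hL, hLf⟩ := exists_modular_eq_of_card_le_one f
  have hne : f - L ≠ 0 := fun h => hf (sub_eq_zero.1 h ▸ hL)
  have hker : (tightMatrix f).map ((↑) : ℤ → ℝ) *ᵥ (f - L) = 0 := by
    rw [tightMatrix_map_mulVec_eq_zero_iff]
    refine ⟨fun I J _ hIJ => ?_, fun I hI => sub_eq_zero.2 (hLf I hI).symm⟩
    rw [map_sub, hIJ, modular_iff_supermodularityValue_eq_zero.1 hL, sub_zero]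
  have hrank := rank_lt_card_of_mulVec_eq_zero _ hne hker
  obtain ⟨t, ht, htker, hbound⟩ := exists_int_mulVec_eq_zero_abs_le_of_rank_lt (tightMatrix f)
    hrank (C := 4) (by norm_num) (abs_tightMatrix_le f)
  obtain ⟨htight, hsmall⟩ := (tightMatrix_map_mulVec_eq_zero_iff f t).1 htker
  refine ⟨t, ht, hsmall, htight, fun I => (hbound I).trans ?_⟩
  simp only [Fintype.card_finset, Fintype.card_fin] at hrank ⊢
  push_cast
  exact pow_le_pow_right₀ (one_le_mul_of_one_le_of_one_le (one_le_pow₀ one_le_two) (by norm_num))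
    (by omega)

theorem IrreducibleSupermodular.exists_int_modular_sub_smul {n : ℕ} {f : Finset (Fin n) → ℝ}
    (hf : IrreducibleSupermodular f) :
    ∃ (t : Finset (Fin n) → ℤ) (l : ℝ), l ≠ 0 ∧ Modular ((fun I => (t I : ℝ)) - l • f) ∧
      ∀ I, |t I| ≤ (2 ^ n * 4) ^ (2 ^ n - 1) := by
  obtain ⟨t, ht, hsmall, htight, hbound⟩ := exists_int_tight_abs_le hf.2.1
  obtain ⟨l, hl⟩ := hf.exists_modular_sub_smul_s11 (h := fun I => (t I : ℝ)) fun I J hIJ h0 => by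
    rw [supermodularityValue_intCast, htight I J hIJ h0, Int.cast_zero]
  refine ⟨t, l, ?_, hl, hbound⟩
  rintro rfl
  rw [zero_smul, sub_zero] at hl
  have hzero := hl.eq_zero_of_card_le_one fun I hI => by rw [hsmall I hI, Int.cast_zero]
  exact ht (funext fun I => by simpa using congrFun hzero I)

theorem IrreducibleSupermodular.abs_le_of_gcd_eq_one {n : ℕ} {f : Finset (Fin n) → ℝ}
    (hf : IrreducibleSupermodular f)
    {s : Finset (Fin n) → Finset (Fin n) → ℤ} {c : ℝ} (hc : c ≠ 0)
    (hs : ∀ I J, ClosePair I J → (s I J : ℝ) = c * supermodularityValue I J f)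
    (hgcd : ({p : Finset (Fin n) × Finset (Fin n) | ClosePair p.1 p.2} : Finset _).gcd
      (fun p => s p.1 p.2) = 1) {I J : Finset (Fin n)} (hIJ : ClosePair I J) :
    |s I J| ≤ 4 * (2 ^ n * 4) ^ (2 ^ n - 1) := by
  obtain ⟨t, l, hl, hmod, hbound⟩ := hf.exists_int_modular_sub_smul
  have hprop : ∀ I J, ClosePair I J →
      ((supermodularityValue I J t : ℤ) : ℝ) = l / c * s I J := fun I J h => by
    have := modular_iff_supermodularityValue_eq_zero.1 hmod I J
    rw [map_sub, map_smul, supermodularityValue_intCast, sub_eq_zero, smul_eq_mul] at this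
    rw [this, hs I J h, ← mul_assoc, div_mul_cancel₀ _ hc]
  have hle : |s I J| ≤ |supermodularityValue I J t| :=
    abs_le_abs_of_gcd_eq_one_of_cast_eq_mul (K := ℝ) (a := l / c) hgcd (div_ne_zero hl hc)
      (T := fun p => supermodularityValue p.1 p.2 t)
      (fun p hp => hprop p.1 p.2 (mem_filter.1 hp).2) (p := (I, J)) (by simpa using hIJ)
  exact hle.trans (abs_supermodularityValue_le hbound I J)

theorem pred_mul_four_mul_pow_le_two_pow (n : ℕ) :
    (n - 1) * (4 * (2 ^ n * 4) ^ (2 ^ n - 1)) ≤ 2 ^ (n ^ 2 * 2 ^ n) := by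
  obtain hn | hn := lt_or_ge n 2
  · simp [show n - 1 = 0 by omega]
  calc (n - 1) * (4 * (2 ^ n * 4) ^ (2 ^ n - 1))
      ≤ 2 ^ n * (4 * (2 ^ n * 4) ^ (2 ^ n - 1)) := by
        gcongr
        exact (n.sub_le 1).trans n.lt_two_pow_self.le
    _ = (2 ^ n * 4) ^ 2 ^ n := by
        rw [← mul_assoc, mul_pow_sub_one (by positivity)]
    _ = 2 ^ ((n + 2) * 2 ^ n) := by rw [pow_mul, pow_add]; norm_num
    _ ≤ 2 ^ (n ^ 2 * 2 ^ n) := by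
        gcongr
        · norm_num
        · nlinarith

/-- Let `f` be an irreducible supermodular function on `2^[n]`, and let `s` be the
vector of supermodularity values of `f` scaled (by a positive factor `c`) so that it
has relatively prime integer entries.  Then all path sums of `s` along permutations
with the same first entry agree, say with value `m_i` for first entry `i` (the weight
of color `i`), and the complexity `max_i m_i` of `f` is at most `2^{n²·2^n}`. -/
theorem complexity_of_irreducible_supermodular {n : ℕ} (hn : 0 < n)
    (f : Finset (Fin n) → ℝ) (hf : IrreducibleSupermodular f)
    (s : Finset (Fin n) → Finset (Fin n) → ℤ) (c : ℝ) (hc : 0 < c)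
    (hs : ∀ I J : Finset (Fin n), ClosePair I J →
      (s I J : ℝ) = c * (f (I ∩ J) + f (I ∪ J) - f I - f J))
    (hgcd : Finset.gcd
      (Finset.univ.filter (fun p : Finset (Fin n) × Finset (Fin n) => ClosePair p.1 p.2))
      (fun p => s p.1 p.2) = 1)
    (m : Fin n → ℤ)
    (hm : ∀ σ : Equiv.Perm (Fin n), pathSumZ σ s = m (σ ⟨0, hn⟩)) :
    ∀ i : Fin n, m i ≤ 2 ^ (n ^ 2 * 2 ^ n) := by
  intro i
  have hle : ∀ I J, ClosePair I J → s I J ≤ 4 * (2 ^ n * 4) ^ (2 ^ n - 1) := fun I J hIJ =>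
    (le_abs_self _).trans (hf.abs_le_of_gcd_eq_one hc.ne' hs hgcd hIJ)
  calc m i = pathSumZ (Equiv.swap ⟨0, hn⟩ i) s := by rw [hm, Equiv.swap_apply_left]
    _ ≤ (n - 1 : ℕ) * (4 * (2 ^ n * 4) ^ (2 ^ n - 1)) := pathSumZ_le _ hle
    _ ≤ 2 ^ (n ^ 2 * 2 ^ n) := mod_cast pred_mul_four_mul_pow_le_two_pow n
end
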